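/- (Proposition 5.1) Let p be an odd prime and let ζ ∈ ℤ_p be a primitive (p−1)-st root of unity. Let Φ_ζ be the ℚ_p-algebra endomorphism of V := ℚ_p[X]/(X^p) sending the class x of X to 1 − Σ_{n=0}^{p−1} C(ζ,n)(−x)^n. Then for every integer k with 1 ≤ k ≤ p−2, the eigenspace {g ∈ V : Φ_ζ(g) = ζ^k · g} is a one-dimensional ℚ_p-subspace of V, spanned by an element of the form f_k = x^k + Σ_{j=k+1}^{p−1} a_j x^j with a_j ∈ ℚ_p (i.e. a polynomial whose lowest-degree term is x^k with coefficient 1). -/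

import Mathlib

open Polynomial

noncomputable def pbinom (p : ℕ) [Fact p.Prime] (y : ℚ_[p]) (n : ℕ) : ℚ_[p] :=
  (descPochhammer ℚ_[p] n).eval y / (n.factorial : ℚ_[p])

noncomputable abbrev TruncV (p : ℕ) [Fact p.Prime] : Type :=
  Polynomial ℚ_[p] ⧸ Ideal.span {(Polynomial.X : Polynomial ℚ_[p]) ^ p}

noncomputable def xV (p : ℕ) [Fact p.Prime] : TruncV p :=
  Ideal.Quotient.mk _ Polynomial.X

noncomputable def phiImg (p : ℕ) [Fact p.Prime] (a : ℚ_[p]) : TruncV p :=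
  1 - ∑ n ∈ Finset.range p, pbinom p a n • (-xV p) ^ n


lemma trunc_smul (p : ℕ) [Fact p.Prime] (c : ℚ_[p]) (v : TruncV p) :
    c • v = algebraMap ℚ_[p] (TruncV p) c * v := Algebra.smul_def c v

lemma trunc_neg_sq (p : ℕ) [Fact p.Prime] (v : TruncV p) : (-v) ^ 2 = v ^ 2 := neg_sq v

lemma xV_pow_p (p : ℕ) [Fact p.Prime] : xV p ^ p = 0 := by
  unfold xV
  rw [← map_pow, Ideal.Quotient.eq_zero_iff_mem]
  exact Ideal.subset_span rfl

lemma trunc_split (p : ℕ) [Fact p.Prime] (q : TruncV p) :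
    ∃ (c : ℚ_[p]) (r : TruncV p), q = c • 1 + xV p * r := by
  obtain ⟨P, rfl⟩ := Ideal.Quotient.mk_surjective q
  obtain ⟨R, hR⟩ := Polynomial.X_dvd_sub_C (p := P)
  refine ⟨P.coeff 0, Ideal.Quotient.mk _ R, ?_⟩
  have h : P = P.coeff 0 • (1 : Polynomial ℚ_[p]) + X * R := by
    rw [← hR, Polynomial.smul_eq_C_mul]; ring
  conv_lhs => rw [h]
  rw [map_add, map_mul]
  rfl

lemma coeff_zero (p : ℕ) [Fact p.Prime] (m : ℕ) (hm : m < p) (c : ℚ_[p])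
    (h : xV p ^ (m + 1) ∣ c • xV p ^ m) : c = 0 := by
  obtain ⟨r, hr⟩ := h
  have h1 : c • xV p ^ (p - 1) = 0 := by
    have e1 : p - 1 = m + (p - 1 - m) := by omega
    have e2 : p = m + 1 + (p - 1 - m) := by omega
    have h3 : xV p ^ (m + 1) * xV p ^ (p - 1 - m) = 0 := by
      rw [← pow_add, ← e2, xV_pow_p]
    rw [e1, pow_add, ← smul_mul_assoc, hr, mul_right_comm, h3, zero_mul]
  have h2 : (Ideal.Quotient.mk (Ideal.span {(X : Polynomial ℚ_[p]) ^ p}))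
      (c • X ^ (p - 1)) = 0 := h1
  rw [Ideal.Quotient.eq_zero_iff_mem, Ideal.mem_span_singleton, Polynomial.X_pow_dvd_iff] at h2
  have := h2 (p - 1) (by omega)
  simpa using this

lemma expand (p : ℕ) [Fact p.Prime] (d : ℕ) : ∀ m, m + d = p → ∀ q : TruncV p,
    ∃ c : ℕ → ℚ_[p], xV p ^ m * q = ∑ j ∈ Finset.Ico m p, c j • xV p ^ j := by
  induction d with
  | zero =>
    intro m hm q
    obtain rfl : m = p := by omega
    exact ⟨0, by simp [xV_pow_p]⟩
  | succ d ih =>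
    intro m hm q
    obtain ⟨a, r, rfl⟩ := trunc_split p q
    obtain ⟨c, hc⟩ := ih (m + 1) (by omega) r
    refine ⟨Function.update c m a, ?_⟩
    rw [Finset.sum_eq_sum_Ico_succ_bot (by omega : m < p), Function.update_self, mul_add,
      ← mul_assoc, ← pow_succ, hc, mul_smul_comm, mul_one]
    congr 1
    apply Finset.sum_congr rfl
    intro j hj
    rw [Finset.mem_Ico] at hj
    rw [Function.update_of_ne (by omega)]

lemma phiImg_eq (p : ℕ) [Fact p.Prime] (hp : 2 ≤ p) (a : ℚ_[p]) :
    ∃ u, phiImg p a = xV p * (a • 1 + xV p * u) := by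
  have h : ∀ n, ∃ u, ∑ i ∈ Finset.range (n + 2), pbinom p a i • (-xV p) ^ i
      = 1 - a • xV p + xV p ^ 2 * u := by
    intro n
    induction n with
    | zero =>
      refine ⟨0, ?_⟩
      simp [Finset.sum_range_succ, pbinom, sub_eq_add_neg]
    | succ n ih =>
      obtain ⟨u, hu⟩ := ih
      rw [Finset.sum_range_succ, hu]
      refine ⟨u + pbinom p a (n + 2) • (-xV p) ^ n, ?_⟩
      rw [mul_add, mul_smul_comm, pow_add (-xV p) n 2, trunc_neg_sq, mul_comm ((-xV p) ^ n), add_assoc]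
  obtain ⟨u, hu⟩ := h (p - 2)
  rw [Nat.sub_add_cancel hp] at hu
  refine ⟨-u, ?_⟩
  rw [phiImg, hu, mul_add, mul_smul_comm]
  ring_nf

lemma pow_step (p : ℕ) [Fact p.Prime] (b : ℚ_[p]) (u : TruncV p) (j : ℕ) :
    ∃ v, (b • 1 + xV p * u) ^ j = b ^ j • 1 + xV p * v := by
  induction j with
  | zero => exact ⟨0, by simp⟩
  | succ j ih =>
    obtain ⟨v, hv⟩ := ih
    refine ⟨b • v + b ^ j • u + xV p * u * v, ?_⟩
    rw [pow_succ, hv]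
    simp only [trunc_smul, map_pow]
    ring

lemma phi_step (p : ℕ) [Fact p.Prime] (b : ℚ_[p]) (Φ : TruncV p →ₐ[ℚ_[p]] TruncV p)
    (u : TruncV p) (hΦ : Φ (xV p) = xV p * (b • 1 + xV p * u)) (m : ℕ) (c : ℚ_[p])
    (r : TruncV p) :
    ∃ v, Φ (xV p ^ m * (c • 1 + xV p * r)) = (b ^ m * c) • xV p ^ m + xV p ^ (m + 1) * v := by
  obtain ⟨v, hv⟩ := pow_step p b u m
  rw [map_mul, map_pow, hΦ, mul_pow, hv, map_add, map_smul, map_one, map_mul, hΦ]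
  refine ⟨c • v + (b ^ m • 1 + xV p * v) * (b • 1 + xV p * u) * Φ r, ?_⟩
  simp only [trunc_smul, map_pow, map_mul]
  ring

lemma surj_step (p : ℕ) [Fact p.Prime] (b l : ℚ_[p]) (Φ : TruncV p →ₐ[ℚ_[p]] TruncV p)
    (u : TruncV p) (hΦ : Φ (xV p) = xV p * (b • 1 + xV p * u)) (d : ℕ) :
    ∀ m, m + d = p → (∀ j, m ≤ j → j < p → b ^ j ≠ l) → ∀ q,
      ∃ r, Φ (xV p ^ m * r) - l • (xV p ^ m * r) = xV p ^ m * q := by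
  induction d with
  | zero =>
    intro m hm _ q
    obtain rfl : m = p := by omega
    exact ⟨0, by simp [xV_pow_p]⟩
  | succ d ih =>
    intro m hm hne q
    obtain ⟨a, s, rfl⟩ := trunc_split p q
    have hb : b ^ m - l ≠ 0 := sub_ne_zero.mpr (hne m le_rfl (by omega))
    obtain ⟨v, hv⟩ := phi_step p b Φ u hΦ m (a / (b ^ m - l)) 0
    obtain ⟨r, hr⟩ := ih (m + 1) (by omega) (fun j h1 h2 => hne j (by omega) h2) (s - v)
    refine ⟨(a / (b ^ m - l)) • 1 + xV p * r, ?_⟩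
    have e : xV p ^ m * ((a / (b ^ m - l)) • 1 + xV p * r)
        = xV p ^ m * ((a / (b ^ m - l)) • 1 + xV p * 0) + xV p ^ (m + 1) * r := by ring
    have e2 : a = b ^ m * (a / (b ^ m - l)) - l * (a / (b ^ m - l)) := by field_simp
    rw [e, map_add, hv, smul_add]
    have e3 : a • (1 : TruncV p) = (b ^ m * (a / (b ^ m - l))) • 1
        - (l * (a / (b ^ m - l))) • 1 := by rw [← sub_smul, ← e2]
    rw [e3]
    have hr' := hr
    simp only [trunc_smul, map_mul (algebraMap ℚ_[p] (TruncV p))] at hr' ⊢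
    linear_combination hr'

lemma uniq_step (p : ℕ) [Fact p.Prime] (b l : ℚ_[p]) (Φ : TruncV p →ₐ[ℚ_[p]] TruncV p)
    (u : TruncV p) (hΦ : Φ (xV p) = xV p * (b • 1 + xV p * u)) (m : ℕ) (hm : m < p)
    (hne : b ^ m ≠ l) (g : TruncV p) (hg : Φ g = l • g) (hd : xV p ^ m ∣ g) :
    xV p ^ (m + 1) ∣ g := by
  obtain ⟨q, rfl⟩ := hd
  obtain ⟨a, s, rfl⟩ := trunc_split p q
  obtain ⟨v, hv⟩ := phi_step p b Φ u hΦ m a s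
  have h0 : (b ^ m - l) * a = 0 := by
    apply coeff_zero p m hm
    refine ⟨l • s - v, ?_⟩
    rw [hv] at hg
    simp only [trunc_smul, map_mul (algebraMap ℚ_[p] (TruncV p)), map_sub (algebraMap ℚ_[p] (TruncV p))] at hg ⊢
    linear_combination hg
  have ha : a = 0 := by
    rcases mul_eq_zero.mp h0 with h | h
    · exact absurd (sub_eq_zero.mp h) hne
    · exact h
  subst ha
  exact ⟨s, by rw [zero_smul]; ring⟩

lemma uniq_iter (p : ℕ) [Fact p.Prime] (b l : ℚ_[p]) (Φ : TruncV p →ₐ[ℚ_[p]] TruncV p)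
    (u : TruncV p) (hΦ : Φ (xV p) = xV p * (b • 1 + xV p * u)) (m d : ℕ) (hm : m + d ≤ p)
    (hne : ∀ j, m ≤ j → j < m + d → b ^ j ≠ l) (g : TruncV p) (hg : Φ g = l • g)
    (hd : xV p ^ m ∣ g) : xV p ^ (m + d) ∣ g := by
  induction d with
  | zero => exact hd
  | succ d ih =>
    exact uniq_step p b l Φ u hΦ (m + d) (by omega) (hne _ (by omega) (by omega)) g hg
      (ih (by omega) (fun j h1 h2 => hne j h1 (by omega)))

/-- Proposition 5.1: for `1 ≤ k ≤ p-2`, the `ζ^k`-eigenspace of the Adams operation `ψ_ζ`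
on `ℚ_p[X]/(X^p)` is one-dimensional, spanned by `f_k = x^k + higher order terms`. -/
theorem eigenspace_span_dim_one (p : ℕ) [Fact p.Prime] (hp : Odd p) (ζ : ℤ_[p])
    (hζ : ζ ^ (p - 1) = 1) (hord : orderOf ζ = p - 1)
    (Φ : TruncV p →ₐ[ℚ_[p]] TruncV p)
    (hΦ : Φ (xV p) = phiImg p (ζ : ℚ_[p]))
    (k : ℕ) (hk1 : 1 ≤ k) (hk2 : k ≤ p - 2) :
    ∃ c : ℕ → ℚ_[p],
      Module.End.eigenspace (Φ.toLinearMap) ((ζ : ℚ_[p]) ^ k) =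
        Submodule.span ℚ_[p]
          {xV p ^ k + ∑ j ∈ Finset.Ico (k + 1) p, c j • xV p ^ j} ∧
      Module.finrank ℚ_[p]
        (Module.End.eigenspace (Φ.toLinearMap) ((ζ : ℚ_[p]) ^ k)) = 1 := by
  have hp2 : 2 ≤ p := (Fact.out : p.Prime).two_le
  obtain ⟨u, hu⟩ := phiImg_eq p hp2 (ζ : ℚ_[p])
  rw [hu] at hΦ
  have hprim : IsPrimitiveRoot ζ (p - 1) := hord ▸ IsPrimitiveRoot.orderOf ζ
  have hne : ∀ j, j < p → j ≠ k → (ζ : ℚ_[p]) ^ j ≠ (ζ : ℚ_[p]) ^ k := by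
    intro j hj hjk h
    have h' : ζ ^ j = ζ ^ k := by
      apply PadicInt.ext
      push_cast
      exact h
    by_cases hj' : j < p - 1
    · exact hjk (hprim.pow_inj hj' (by omega) h')
    · obtain rfl : j = p - 1 := by omega
      rw [hζ] at h'
      exact hprim.pow_ne_one_of_pos_of_lt (by omega) (by omega) h'.symm
  set b : ℚ_[p] := (ζ : ℚ_[p]) with hb
  obtain ⟨v, hv⟩ := phi_step p b Φ u hΦ k 1 0
  obtain ⟨r, hr⟩ := surj_step p b (b ^ k) Φ u hΦ (p - (k + 1)) (k + 1) (by omega)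
    (fun j h1 h2 => hne j h2 (by omega)) (-v)
  obtain ⟨c, hc⟩ := expand p (p - (k + 1)) (k + 1) (by omega) r
  set f : TruncV p := xV p ^ k + ∑ j ∈ Finset.Ico (k + 1) p, c j • xV p ^ j with hf
  have hf2 : f = xV p ^ k + xV p ^ (k + 1) * r := by rw [hf, hc]
  have hfe : Φ f = b ^ k • f := by
    simp only [mul_zero, add_zero, one_smul, mul_one] at hv
    rw [hf2, map_add, hv, smul_add]
    linear_combination hr
  have hf0 : f ≠ 0 := by
    intro h0
    have : (1 : ℚ_[p]) = 0 := by
      apply coeff_zero p k (by omega)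
      refine ⟨-r, ?_⟩
      rw [one_smul]
      linear_combination h0 - hf2
    exact one_ne_zero this
  have heig : Module.End.eigenspace (Φ.toLinearMap) (b ^ k) = Submodule.span ℚ_[p] {f} := by
    ext g
    rw [Module.End.mem_eigenspace_iff, Submodule.mem_span_singleton]
    constructor
    · intro hg
      have hg' : Φ g = b ^ k • g := hg
      have h1 := uniq_iter p b (b ^ k) Φ u hΦ 0 k (by omega)
        (fun j _ h2 => hne j (by omega) (by omega)) g hg' (by simp)
      rw [zero_add] at h1
      obtain ⟨q, hq⟩ := h1
      obtain ⟨a, s, rfl⟩ := trunc_split p q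
      refine ⟨a, ?_⟩
      have h2 := uniq_iter p b (b ^ k) Φ u hΦ (k + 1) (p - (k + 1)) (by omega)
        (fun j h1 h2 => hne j (by omega) (by omega)) (g - a • f)
        (by rw [map_sub, map_smul, hfe, hg', smul_sub, smul_comm])
        ⟨s - a • r, by
          rw [hq, hf2]
          simp only [trunc_smul]
          ring⟩
      rw [show k + 1 + (p - (k + 1)) = p by omega, xV_pow_p, zero_dvd_iff] at h2
      exact (sub_eq_zero.mp h2).symm
    · rintro ⟨a, rfl⟩
      change Φ (a • f) = _
      rw [map_smul, hfe, smul_comm]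
  refine ⟨c, heig, ?_⟩
  rw [heig]
  exact finrank_span_singleton hf0
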